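/- Let ρ₂ be the state obtained from the checkerboard construction with parameters a=b=c=f=j=m=p=r=1, n=0, e=−1, q=s=𝐢, g=h=−𝐢, d=1+𝐢, i=−1−𝐢, k=l=−1+𝐢 (where 𝐢 is the imaginary unit; here N = 21). Then det(ρ₂^Γ) = 2·11·19/(3⁷·7⁹) (in particular ρ₂^Γ is nonsingular), and ρ₂^Γ, which is a Hermitian 9×9 matrix, has exactly two negative eigenvalues (counted with multiplicity). -/

import Mathlib

open Complex ComplexConjugate
open scoped ComplexOrder

noncomputable section

/-- The "odd" checkerboard vector with entries at positions (0,0),(2,0),(1,1),(0,2),(2,2). -/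
def oddVec (a b c d e : ℂ) : Fin 3 × Fin 3 → ℂ := fun u =>
  if u = (0, 0) then a else if u = (2, 0) then b else if u = (1, 1) then c
  else if u = (0, 2) then d else if u = (2, 2) then e else 0

/-- The "even" checkerboard vector with entries at positions (1,0),(0,1),(2,1),(1,2). -/
def evenVec (f g h i : ℂ) : Fin 3 × Fin 3 → ℂ := fun u =>
  if u = (1, 0) then f else if u = (0, 1) then g else if u = (2, 1) then h
  else if u = (1, 2) then i else 0

/-- Tensor product of two vectors of ℂ³, as a function on Fin 3 × Fin 3. -/
def tp (x y : Fin 3 → ℂ) : Fin 3 × Fin 3 → ℂ := fun u => x u.1 * y u.2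

/-- σ = Σ_{t=1}^4 v_t v_t†, a 9×9 complex matrix. -/
def sigmaM (a b c d e f g h i j k l m n p q r s : ℂ) :
    Matrix (Fin 3 × Fin 3) (Fin 3 × Fin 3) ℂ :=
  Matrix.of fun u w =>
    oddVec a b c d e u * conj (oddVec a b c d e w)
      + evenVec f g h i u * conj (evenVec f g h i w)
      + oddVec j k l m n u * conj (oddVec j k l m n w)
      + evenVec p q r s u * conj (evenVec p q r s w)

/-- N = Σ_{t=1}^4 ‖v_t‖². -/
def Nval (a b c d e f g h i j k l m n p q r s : ℂ) : ℝ :=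
  ∑ u : Fin 3 × Fin 3,
    (‖oddVec a b c d e u‖ ^ 2 + ‖evenVec f g h i u‖ ^ 2
      + ‖oddVec j k l m n u‖ ^ 2 + ‖evenVec p q r s u‖ ^ 2)

/-- ρ = (1/N) Σ_{t=1}^4 v_t v_t†. -/
def rhoM (a b c d e f g h i j k l m n p q r s : ℂ) :
    Matrix (Fin 3 × Fin 3) (Fin 3 × Fin 3) ℂ :=
  ((Nval a b c d e f g h i j k l m n p q r s : ℂ))⁻¹
    • sigmaM a b c d e f g h i j k l m n p q r s

/-- The partial transpose: (M^Γ)_{(i,j),(k,l)} = M_{(i,l),(k,j)}. -/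
def ptrans (M : Matrix (Fin 3 × Fin 3) (Fin 3 × Fin 3) ℂ) :
    Matrix (Fin 3 × Fin 3) (Fin 3 × Fin 3) ℂ :=
  Matrix.of fun u w => M (u.1, w.2) (w.1, u.2)

/-- The state ρ₂: parameters a=b=c=f=j=m=p=r=1, n=0, e=−1, q=s=𝐢, g=h=−𝐢,
d=1+𝐢, i=−1−𝐢, k=l=−1+𝐢. -/
def rho2 : Matrix (Fin 3 × Fin 3) (Fin 3 × Fin 3) ℂ :=
  rhoM 1 1 1 (1 + I) (-1) 1 (-I) (-I) (-1 - I) 1 (-1 + I) (-1 + I) 1 0 1 I 1 I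

/-!
The partial transpose of a checkerboard matrix is again a checkerboard matrix, so it splits into a
5 × 5 and a 4 × 4 block. For `21 • ρ₂^Γ` these blocks have `L * diagonal d * Lᴴ` factorizations with
`L` unipotent, whose pivots multiply to `-66` and `-57`. Hence `det ρ₂^Γ = 66 * 57 / 21 ^ 9`, and
since each block has a single negative pivot, Sylvester's law of inertia leaves exactly two negative
eigenvalues.
-/

section Inertia

open Matrix

variable {𝕜 m n : Type*} [RCLike 𝕜]

lemma exists_ne_zero_support_subset_mulVec_eq_zero {K : Type*} [Field K] [Fintype m] [Finite n]
    (G : Matrix n m K) {s : Set m} {t : Set n} (hst : t.ncard < s.ncard) :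
    ∃ x : m → K, x ≠ 0 ∧ Function.support x ⊆ s ∧ ∀ j ∈ t, (G *ᵥ x) j = 0 := by
  classical
  have := Fintype.ofFinite n
  let extend : (s → K) →ₗ[K] m → K := Function.ExtendByZero.linearMap K Subtype.val
  let restrict : (n → K) →ₗ[K] t → K := LinearMap.funLeft K K Subtype.val
  have hker : LinearMap.ker (restrict ∘ₗ G.mulVecLin ∘ₗ extend) ≠ ⊥ := by
    apply LinearMap.ker_ne_bot_of_finrank_lt
    simpa [← Nat.card_eq_fintype_card] using hst
  obtain ⟨y, hy, hy0⟩ := (Submodule.ne_bot_iff _).1 hker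
  have extend_apply (i : s) : extend y i = y i :=
    Subtype.val_injective.extend_apply y 0 i
  refine ⟨extend y, fun h ↦ hy0 ?_, Function.support_subset_iff'.2 fun i hi ↦ ?_,
    fun j hj ↦ congrFun (LinearMap.mem_ker.1 hy) ⟨j, hj⟩⟩
  · ext i
    rw [← extend_apply, h, Pi.zero_apply, Pi.zero_apply]
  · exact Function.extend_apply' y (0 : m → K) i fun ⟨a, ha⟩ ↦ hi (ha ▸ a.2)

variable [Fintype n]

lemma star_dotProduct_diagonal_mulVec [DecidableEq n] (w : n → ℝ) (x : n → 𝕜) :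
    star x ⬝ᵥ diagonal (fun i ↦ (w i : 𝕜)) *ᵥ x = ((∑ i, w i * ‖x i‖ ^ 2 : ℝ) : 𝕜) := by
  simp only [dotProduct, mulVec_diagonal, Pi.star_apply, RCLike.star_def]
  push_cast
  refine Finset.sum_congr rfl fun i _ ↦ ?_
  rw [← RCLike.conj_mul]
  ring

lemma star_dotProduct_mul_mul_conjTranspose_mulVec [Fintype m] (F : Matrix m n 𝕜)
    (B : Matrix n n 𝕜) (x : m → 𝕜) :
    star x ⬝ᵥ (F * B * Fᴴ) *ᵥ x = star (Fᴴ *ᵥ x) ⬝ᵥ B *ᵥ (Fᴴ *ᵥ x) := by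
  rw [← mulVec_mulVec, ← mulVec_mulVec, dotProduct_mulVec, star_mulVec, conjTranspose_conjTranspose]

variable [DecidableEq m] [DecidableEq n]

lemma sum_mul_norm_sq_eq_of_diagonal_eq [Fintype m] {e : m → ℝ} {d : n → ℝ} {F : Matrix m n 𝕜}
    (h : diagonal (fun i ↦ (e i : 𝕜)) = F * diagonal (fun j ↦ (d j : 𝕜)) * Fᴴ) (x : m → 𝕜) :
    ∑ i, e i * ‖x i‖ ^ 2 = ∑ j, d j * ‖(Fᴴ *ᵥ x) j‖ ^ 2 := by
  apply RCLike.ofReal_injective (K := 𝕜)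
  rw [← star_dotProduct_diagonal_mulVec, ← star_dotProduct_diagonal_mulVec, h,
    star_dotProduct_mul_mul_conjTranspose_mulVec]

lemma ncard_neg_le_of_diagonal_eq [Finite m] {e : m → ℝ} {d : n → ℝ} {F : Matrix m n 𝕜}
    (h : diagonal (fun i ↦ (e i : 𝕜)) = F * diagonal (fun j ↦ (d j : 𝕜)) * Fᴴ) :
    {i | e i < 0}.ncard ≤ {j | d j < 0}.ncard := by
  have := Fintype.ofFinite m
  by_contra! hlt
  -- Too few negative `d j` leave a vector on which the form is negative in the coordinates `x` and
  -- nonnegative in the coordinates `Fᴴ *ᵥ x`.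
  obtain ⟨x, hx0, hxe, hxd⟩ := exists_ne_zero_support_subset_mulVec_eq_zero Fᴴ hlt
  have nonneg : 0 ≤ ∑ j, d j * ‖(Fᴴ *ᵥ x) j‖ ^ 2 := by
    refine Finset.sum_nonneg fun j _ ↦ ?_
    by_cases hj : d j < 0
    · simp [hxd j hj]
    · exact mul_nonneg (not_lt.1 hj) (sq_nonneg _)
  have neg : ∑ i, e i * ‖x i‖ ^ 2 < 0 := by
    have term_neg {i : m} (hi : x i ≠ 0) : e i * ‖x i‖ ^ 2 < 0 :=
      mul_neg_of_neg_of_pos (hxe hi) (pow_pos (norm_pos_iff.2 hi) 2)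
    obtain ⟨i, hi⟩ := Function.ne_iff.1 hx0
    refine Finset.sum_neg' (fun j _ ↦ ?_) ⟨i, Finset.mem_univ i, term_neg hi⟩
    by_cases hj : x j = 0
    · simp [hj]
    · exact (term_neg hj).le
  exact absurd (sum_mul_norm_sq_eq_of_diagonal_eq h x) (neg.trans_le nonneg).ne

variable [Fintype m]

lemma ncard_neg_le_of_mul_diagonal_mul_eq {k : Type*} [Fintype k] {e : m → ℝ} {d : n → ℝ}
    {U : Matrix k m 𝕜} {V : Matrix m k 𝕜} {P : Matrix k n 𝕜} (hVU : V * U = 1)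
    (h : U * diagonal (fun i ↦ (e i : 𝕜)) * Uᴴ = P * diagonal (fun j ↦ (d j : 𝕜)) * Pᴴ) :
    {i | e i < 0}.ncard ≤ {j | d j < 0}.ncard := by
  apply ncard_neg_le_of_diagonal_eq (F := V * P)
  calc
    diagonal (fun i ↦ (e i : 𝕜)) = (V * U) * diagonal (fun i ↦ (e i : 𝕜)) * (V * U)ᴴ := by
      simp [hVU]
    _ = V * (U * diagonal (fun i ↦ (e i : 𝕜)) * Uᴴ) * Vᴴ := by
      simp only [conjTranspose_mul, Matrix.mul_assoc]
    _ = (V * P) * diagonal (fun j ↦ (d j : 𝕜)) * (V * P)ᴴ := by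
      simp only [h, conjTranspose_mul, Matrix.mul_assoc]

lemma ncard_eigenvalues_neg_eq {A : Matrix m m 𝕜} (hA : A.IsHermitian) {d : n → ℝ}
    {P : Matrix m n 𝕜} {Q : Matrix n m 𝕜} (hQP : Q * P = 1)
    (h : A = P * diagonal (fun j ↦ (d j : 𝕜)) * Pᴴ) :
    {i | hA.eigenvalues i < 0}.ncard = {j | d j < 0}.ncard := by
  let U : Matrix m m 𝕜 := hA.eigenvectorUnitary
  have hU : Uᴴ * U = 1 := Unitary.coe_star_mul_self hA.eigenvectorUnitary
  have spectral : A = U * diagonal (fun i ↦ (hA.eigenvalues i : 𝕜)) * Uᴴ :=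
    hA.spectral_theorem.trans (Unitary.conjStarAlgAut_apply _ _)
  exact le_antisymm (ncard_neg_le_of_mul_diagonal_mul_eq hU (spectral.symm.trans h))
    (ncard_neg_le_of_mul_diagonal_mul_eq hQP (h.symm.trans spectral))

lemma ncard_eigenvalues_neg_eq_of_submatrix_eq {A : Matrix m m 𝕜} (hA : A.IsHermitian)
    (e : n ≃ m) {d : n → ℝ} {L : Matrix n n 𝕜} (hL : IsUnit L.det)
    (h : A.submatrix e e = L * diagonal (fun j ↦ (d j : 𝕜)) * Lᴴ) :
    {i | hA.eigenvalues i < 0}.ncard = {j | d j < 0}.ncard := by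
  refine ncard_eigenvalues_neg_eq hA (P := L.submatrix e.symm id) (Q := L⁻¹.submatrix id e.symm)
    ?_ ?_
  · rw [submatrix_mul_equiv, nonsing_inv_mul _ hL, submatrix_id_id]
  · calc
      A = (A.submatrix e e).submatrix e.symm e.symm := by simp
      _ = _ := by rw [h]; rfl

end Inertia

section Checkerboard

open Matrix

/-- A matrix on `ℂ³ ⊗ ℂ³` with the checkerboard pattern: it only couples basis vectors `|i,j⟩`,
`|k,l⟩` for which `i + j` and `k + l` have the same parity. -/
def IsCheckerboard (M : Matrix (Fin 3 × Fin 3) (Fin 3 × Fin 3) ℂ) : Prop :=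
  ∀ u w, Odd ((u.1 + u.2 : ℕ) + (w.1 + w.2 : ℕ)) → M u w = 0

variable {a b c d e f g h i j k l m n p q r s : ℂ} {M : Matrix (Fin 3 × Fin 3) (Fin 3 × Fin 3) ℂ}

lemma isHermitian_sigmaM : (sigmaM a b c d e f g h i j k l m n p q r s).IsHermitian := by
  ext u w
  simp only [sigmaM, conjTranspose_apply, of_apply, RCLike.star_def, map_add, map_mul, conj_conj,
    mul_comm]

lemma isHermitian_rhoM : (rhoM a b c d e f g h i j k l m n p q r s).IsHermitian :=
  isHermitian_sigmaM.smul <| by simp [IsSelfAdjoint]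

lemma isHermitian_ptrans (hM : M.IsHermitian) : (ptrans M).IsHermitian := by
  ext u w
  exact hM.apply _ _

lemma oddVec_eq_zero_of_odd {u : Fin 3 × Fin 3} (hu : Odd (u.1 + u.2 : ℕ)) :
    oddVec a b c d e u = 0 := by
  fin_cases u <;> first | rfl | exact absurd hu (by decide)

lemma evenVec_eq_zero_of_even {u : Fin 3 × Fin 3} (hu : Even (u.1 + u.2 : ℕ)) :
    evenVec f g h i u = 0 := by
  fin_cases u <;> first | rfl | exact absurd hu (by decide)

lemma sum_norm_sq_oddVec :
    ∑ u, ‖oddVec a b c d e u‖ ^ 2 = ‖a‖ ^ 2 + ‖b‖ ^ 2 + ‖c‖ ^ 2 + ‖d‖ ^ 2 + ‖e‖ ^ 2 := by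
  simp [oddVec, Fintype.sum_prod_type, Fin.sum_univ_three]
  ring

lemma sum_norm_sq_evenVec :
    ∑ u, ‖evenVec f g h i u‖ ^ 2 = ‖f‖ ^ 2 + ‖g‖ ^ 2 + ‖h‖ ^ 2 + ‖i‖ ^ 2 := by
  simp [evenVec, Fintype.sum_prod_type, Fin.sum_univ_three]
  ring

lemma isCheckerboard_sigmaM : IsCheckerboard (sigmaM a b c d e f g h i j k l m n p q r s) := by
  intro u w huw
  rcases Nat.even_or_odd (u.1 + u.2 : ℕ) with hu | hu
  · have hw : Odd (w.1 + w.2 : ℕ) := (Nat.odd_add'.1 huw).2 hu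
    simp [sigmaM, evenVec_eq_zero_of_even hu, oddVec_eq_zero_of_odd hw]
  · have hw : Even (w.1 + w.2 : ℕ) := (Nat.odd_add.1 huw).1 hu
    simp [sigmaM, oddVec_eq_zero_of_odd hu, evenVec_eq_zero_of_even hw]

lemma isCheckerboard_rhoM : IsCheckerboard (rhoM a b c d e f g h i j k l m n p q r s) := by
  intro u w huw
  rw [rhoM, Matrix.smul_apply, isCheckerboard_sigmaM u w huw, smul_zero]

lemma IsCheckerboard.ptrans (hM : IsCheckerboard M) : IsCheckerboard (ptrans M) := by
  intro u w huw
  refine hM _ _ ?_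
  convert huw using 1
  dsimp only
  ring

/-- The splitting of the basis of `ℂ³ ⊗ ℂ³` into the supports of `oddVec` and `evenVec`. The order
within each part is the elimination order that keeps the factors of `ρ₂^Γ` below simple. -/
def checkerboardEquiv : Fin 5 ⊕ Fin 4 ≃ Fin 3 × Fin 3 :=
  Equiv.ofBijective
    (Sum.elim ![(2, 2), (0, 2), (2, 0), (0, 0), (1, 1)] ![(1, 2), (2, 1), (0, 1), (1, 0)])
    (by decide)

lemma IsCheckerboard.submatrix_checkerboardEquiv (hM : IsCheckerboard M) :
    M.submatrix checkerboardEquiv checkerboardEquiv =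
      fromBlocks
        (M.submatrix (checkerboardEquiv ∘ Sum.inl) (checkerboardEquiv ∘ Sum.inl)) 0 0
        (M.submatrix (checkerboardEquiv ∘ Sum.inr) (checkerboardEquiv ∘ Sum.inr)) := by
  ext (x | x) (y | y)
  · rfl
  · exact hM _ _ (by revert x y; decide)
  · exact hM _ _ (by revert x y; decide)
  · rfl

end Checkerboard

section Rho2

open Matrix

lemma Nval_rho2 :
    Nval 1 1 1 (1 + I) (-1) 1 (-I) (-I) (-1 - I) 1 (-1 + I) (-1 + I) 1 0 1 I 1 I = 21 := by
  simp only [Nval, Finset.sum_add_distrib, sum_norm_sq_oddVec, sum_norm_sq_evenVec]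
  norm_num [← normSq_eq_norm_sq, normSq_apply]

/-- The block of `21 • ρ₂^Γ` on the support of `oddVec`, ordered as in `checkerboardEquiv`. -/
def rho2OddBlock : Matrix (Fin 5) (Fin 5) ℂ :=
  !![1, -1 + I, -1, 0, 1;
    -1 - I, 3, -1, 2 - I, 2 + I;
    -1, -1, 3, I, 1 - I;
    0, 2 + I, -I, 2, 0;
    1, 2 - I, 1 + I, 0, 3]

/-- The block of `21 • ρ₂^Γ` on the support of `evenVec`, ordered as in `checkerboardEquiv`. -/
def rho2EvenBlock : Matrix (Fin 4) (Fin 4) ℂ :=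
  !![3, -1, 0, -1;
    -1, 2, 1 - I, 3;
    0, 1 + I, 2, -I;
    -1, 3, I, 2]

/-- The unipotent factor of `rho2OddBlock`, found by symmetric Gaussian elimination. -/
def rho2OddFactor : Matrix (Fin 5) (Fin 5) ℂ :=
  !![1, 0, 0, 0, 0;
    -1 - I, 1, 0, 0, 0;
    -1, -2 + I, 1, 0, 0;
    0, 2 + I, -1 - I, 1, 0;
    1, 3 - 2 * I, -10 / 3, 2 - I, 1]

/-- The pivots of `rho2OddBlock`. -/
def rho2OddPivot : Fin 5 → ℝ := ![1, 1, -3, 3, 22 / 3]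

/-- The unipotent factor of `rho2EvenBlock`, found by symmetric Gaussian elimination. -/
def rho2EvenFactor : Matrix (Fin 4) (Fin 4) ℂ :=
  !![1, 0, 0, 0;
    -1 / 3, 1, 0, 0;
    0, 3 / 5 + 3 / 5 * I, 1, 0;
    -1 / 3, 8 / 5, -2 + 13 / 4 * I, 1]

/-- The pivots of `rho2EvenBlock`. -/
def rho2EvenPivot : Fin 4 → ℝ := ![3, 5 / 3, 4 / 5, -57 / 4]

lemma ptrans_rho2_submatrix_inl :
    (ptrans rho2).submatrix (checkerboardEquiv ∘ Sum.inl) (checkerboardEquiv ∘ Sum.inl) =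
      (21 : ℂ)⁻¹ • rho2OddBlock := by
  ext x y
  simp only [rho2, rhoM, Nval_rho2, ptrans, submatrix_apply, of_apply, Matrix.smul_apply,
    ofReal_ofNat]
  congr 1
  fin_cases x <;> fin_cases y <;>
    simp [checkerboardEquiv, rho2OddBlock, sigmaM, oddVec, evenVec, Complex.ext_iff] <;>
    norm_num

lemma ptrans_rho2_submatrix_inr :
    (ptrans rho2).submatrix (checkerboardEquiv ∘ Sum.inr) (checkerboardEquiv ∘ Sum.inr) =
      (21 : ℂ)⁻¹ • rho2EvenBlock := by
  ext x y
  simp only [rho2, rhoM, Nval_rho2, ptrans, submatrix_apply, of_apply, Matrix.smul_apply,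
    ofReal_ofNat]
  congr 1
  fin_cases x <;> fin_cases y <;>
    simp [checkerboardEquiv, rho2EvenBlock, sigmaM, oddVec, evenVec, Complex.ext_iff] <;>
    norm_num

lemma rho2OddBlock_eq : rho2OddBlock =
    rho2OddFactor * diagonal (fun x ↦ (rho2OddPivot x : ℂ)) * rho2OddFactorᴴ := by
  ext x y
  rw [mul_apply]
  simp only [mul_diagonal, conjTranspose_apply]
  fin_cases x <;> fin_cases y <;>
    norm_num [rho2OddBlock, rho2OddFactor, rho2OddPivot, Fin.sum_univ_succ, Complex.ext_iff,
      conj_ofNat]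

lemma rho2EvenBlock_eq : rho2EvenBlock =
    rho2EvenFactor * diagonal (fun x ↦ (rho2EvenPivot x : ℂ)) * rho2EvenFactorᴴ := by
  ext x y
  rw [mul_apply]
  simp only [mul_diagonal, conjTranspose_apply]
  fin_cases x <;> fin_cases y <;>
    norm_num [rho2EvenBlock, rho2EvenFactor, rho2EvenPivot, Fin.sum_univ_succ, Complex.ext_iff,
      conj_ofNat]

lemma det_rho2OddFactor : rho2OddFactor.det = 1 := by
  rw [det_of_isLowerTriangular]
  · simp [rho2OddFactor, Fin.prod_univ_succ]
  · intro x y (hxy : x < y)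
    fin_cases x <;> fin_cases y <;> first | rfl | exact absurd hxy (by decide)

lemma det_rho2EvenFactor : rho2EvenFactor.det = 1 := by
  rw [det_of_isLowerTriangular]
  · simp [rho2EvenFactor, Fin.prod_univ_succ]
  · intro x y (hxy : x < y)
    fin_cases x <;> fin_cases y <;> first | rfl | exact absurd hxy (by decide)

/-- The unipotent factor of `ρ₂^Γ`, ordered as in `checkerboardEquiv`. -/
def rho2Factor : Matrix (Fin 5 ⊕ Fin 4) (Fin 5 ⊕ Fin 4) ℂ :=
  fromBlocks rho2OddFactor 0 0 rho2EvenFactor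

/-- The pivots of `ρ₂^Γ`, ordered as in `checkerboardEquiv`. -/
def rho2Pivot : Fin 5 ⊕ Fin 4 → ℝ :=
  fun x ↦ Sum.elim rho2OddPivot rho2EvenPivot x / 21

lemma det_rho2Factor : rho2Factor.det = 1 := by
  rw [rho2Factor, det_fromBlocks_zero₁₂, det_rho2OddFactor, det_rho2EvenFactor, one_mul]

lemma ptrans_rho2_submatrix_eq :
    (ptrans rho2).submatrix checkerboardEquiv checkerboardEquiv =
      rho2Factor * diagonal (fun x ↦ (rho2Pivot x : ℂ)) * rho2Factorᴴ := by
  have hpivot : diagonal (fun x ↦ (rho2Pivot x : ℂ)) =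
      (21 : ℂ)⁻¹ • fromBlocks (diagonal fun x ↦ (rho2OddPivot x : ℂ)) 0 0
        (diagonal fun x ↦ (rho2EvenPivot x : ℂ)) := by
    rw [fromBlocks_diagonal, ← diagonal_smul]
    congr 1
    ext (x | x) <;> simp [rho2Pivot, div_eq_inv_mul]
  calc
    _ = fromBlocks ((21 : ℂ)⁻¹ • rho2OddBlock) 0 0 ((21 : ℂ)⁻¹ • rho2EvenBlock) := by
      rw [← ptrans_rho2_submatrix_inl, ← ptrans_rho2_submatrix_inr]
      exact isCheckerboard_rhoM.ptrans.submatrix_checkerboardEquiv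
    _ = rho2Factor * diagonal (fun x ↦ (rho2Pivot x : ℂ)) * rho2Factorᴴ := by
      simp [-fromBlocks_diagonal, hpivot, rho2Factor, rho2OddBlock_eq, rho2EvenBlock_eq,
        fromBlocks_smul, fromBlocks_conjTranspose, fromBlocks_multiply]

lemma isHermitian_ptrans_rho2 : (ptrans rho2).IsHermitian :=
  isHermitian_ptrans isHermitian_rhoM

lemma prod_rho2Pivot : ∏ x, rho2Pivot x = 2 * 11 * 19 / (3 ^ 7 * 7 ^ 9) := by
  norm_num [rho2Pivot, rho2OddPivot, rho2EvenPivot, Fin.prod_univ_succ]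

lemma det_ptrans_rho2 : (ptrans rho2).det = ((∏ x, rho2Pivot x : ℝ) : ℂ) := by
  rw [← det_submatrix_equiv_self checkerboardEquiv, ptrans_rho2_submatrix_eq, det_mul, det_mul,
    det_conjTranspose, det_rho2Factor, det_diagonal, star_one, one_mul, mul_one, ofReal_prod]

lemma setOf_rho2Pivot_neg : {x | rho2Pivot x < 0} = {Sum.inl 2, Sum.inr 3} := by
  ext (x | x) <;> fin_cases x <;> simp [rho2Pivot, rho2OddPivot, rho2EvenPivot] <;> norm_num

end Rho2

theorem stmt13 :
    (ptrans rho2).det = ((2 * 11 * 19 / (3 ^ 7 * 7 ^ 9) : ℂ)) ∧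
    ∃ hH : (ptrans rho2).IsHermitian,
      {w : Fin 3 × Fin 3 | hH.eigenvalues w < 0}.ncard = 2 := by
  refine ⟨?_, isHermitian_ptrans_rho2, ?_⟩
  · rw [det_ptrans_rho2, prod_rho2Pivot]
    norm_num
  · have hunit : IsUnit rho2Factor.det := det_rho2Factor ▸ isUnit_one
    rw [ncard_eigenvalues_neg_eq_of_submatrix_eq (d := rho2Pivot) isHermitian_ptrans_rho2
      checkerboardEquiv hunit ptrans_rho2_submatrix_eq, setOf_rho2Pivot_neg,
      Set.ncard_pair Sum.inl_ne_inr]
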